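/- Let k be a field with char k ≠ 2. The homogeneous polynomials of degree 4 in k[x₀₀, x₀₁, x₁₀, x₁₁] that are invariant under each of the linear substitutions of the variables induced by the matrices α₀₁, α₁₀, β₀₁ and β₁₀ form a k-vector space of dimension 5 with basis {S, P, Q₀₁, Q₁₀, Q₁₁}. -/

import Mathlib

/-!
The substitution attached to `α_x` renames the variables by translation by `x`, and the one attached
to `β_{x*}` multiplies the monomial with exponents `(a, b, c, d)` (in the order `00, 01, 10, 11`) by
a sign: `(-1)^(b+d)` for `β₀₁` and `(-1)^(c+d)` for `β₁₀`. As `2 ≠ 0` in `k`, an invariant quartic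
only involves monomials with `b + d` and `c + d` even; in degree 4 all four exponents then have the
same parity, which leaves eleven monomials. The translations permute these eleven with five orbits,
whose sums are `S, P, Q₀₁, Q₁₀, Q₁₁`.

Hence an invariant quartic vanishes as soon as its coefficients at five orbit representatives do
(`eq_zero_of_reps`), while the `5 × 5` matrix of coefficients of `S, P, Q₀₁, Q₁₀, Q₁₁` at these
representatives is the identity (`coeff_reps`). Spanning and linear independence follow.
-/

open Matrix MvPolynomial

/-- The group `H = (ℤ/2ℤ)²`, with elements written `00, 01, 10, 11`. -/
abbrev H2 : Type := ZMod 2 × ZMod 2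

/-- The pairing `⟨x, z⟩ = (−1)^(x₁z₁ + x₂z₂) ∈ k`. -/
def pairing (k : Type*) [Field k] (x z : H2) : k :=
  (-1 : k) ^ (x.1.val * z.1.val + x.2.val * z.2.val)

/-- `α_x`: the permutation matrix of `z ↦ z + x`, sending `e_z` to `e_{z+x}`. -/
def alphaM (k : Type*) [Field k] (x : H2) : Matrix H2 H2 k :=
  Matrix.of fun i j => if i = j + x then 1 else 0

/-- `β_{x*}`: the diagonal matrix with entry `⟨x*, z⟩` at position `z`. -/
def betaM (k : Type*) [Field k] (xs : H2) : Matrix H2 H2 k :=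
  Matrix.diagonal fun z => pairing k xs z

/-- The linear substitution of the variables `x_z`, `z ∈ H`, induced by a matrix. -/
noncomputable def act {k : Type*} [Field k] (M : Matrix H2 H2 k) :
    MvPolynomial H2 k →ₐ[k] MvPolynomial H2 k :=
  MvPolynomial.aeval fun z => ∑ w : H2, M z w • MvPolynomial.X w

/-- `S = x₀₀⁴+x₀₁⁴+x₁₀⁴+x₁₁⁴`. -/
noncomputable def Sq (k : Type*) [Field k] : MvPolynomial H2 k :=
  X (0, 0) ^ 4 + X (0, 1) ^ 4 + X (1, 0) ^ 4 + X (1, 1) ^ 4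

/-- `P = x₀₀x₀₁x₁₀x₁₁`. -/
noncomputable def Pq (k : Type*) [Field k] : MvPolynomial H2 k :=
  X (0, 0) * X (0, 1) * X (1, 0) * X (1, 1)

/-- `Q₀₁ = x₀₀²x₀₁² + x₁₀²x₁₁²`. -/
noncomputable def Q01q (k : Type*) [Field k] : MvPolynomial H2 k :=
  X (0, 0) ^ 2 * X (0, 1) ^ 2 + X (1, 0) ^ 2 * X (1, 1) ^ 2

/-- `Q₁₀ = x₀₀²x₁₀² + x₀₁²x₁₁²`. -/
noncomputable def Q10q (k : Type*) [Field k] : MvPolynomial H2 k :=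
  X (0, 0) ^ 2 * X (1, 0) ^ 2 + X (0, 1) ^ 2 * X (1, 1) ^ 2

/-- `Q₁₁ = x₀₀²x₁₁² + x₀₁²x₁₀²`. -/
noncomputable def Q11q (k : Type*) [Field k] : MvPolynomial H2 k :=
  X (0, 0) ^ 2 * X (1, 1) ^ 2 + X (0, 1) ^ 2 * X (1, 0) ^ 2

/-- The exponent vector with entries `a, b, c, d` at `00, 01, 10, 11`. -/
noncomputable def expo (a b c d : ℕ) : H2 →₀ ℕ :=
  Finsupp.single (0, 0) a + Finsupp.single (0, 1) b + Finsupp.single (1, 0) c +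
    Finsupp.single (1, 1) d

theorem forall_H2 {p : H2 → Prop} (h00 : p (0, 0)) (h01 : p (0, 1)) (h10 : p (1, 0))
    (h11 : p (1, 1)) : ∀ z, p z := by
  rintro ⟨x, y⟩
  fin_cases x <;> fin_cases y <;> assumption

theorem expo_apply (a b c d : ℕ) :
    expo a b c d (0, 0) = a ∧ expo a b c d (0, 1) = b ∧ expo a b c d (1, 0) = c ∧
      expo a b c d (1, 1) = d := by
  simp [expo]

theorem eq_expo (m : H2 →₀ ℕ) : m = expo (m (0, 0)) (m (0, 1)) (m (1, 0)) (m (1, 1)) := by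
  ext z
  revert z
  obtain ⟨h1, h2, h3, h4⟩ := expo_apply (m (0, 0)) (m (0, 1)) (m (1, 0)) (m (1, 1))
  exact forall_H2 h1.symm h2.symm h3.symm h4.symm

theorem expo_inj {a b c d a' b' c' d' : ℕ} :
    expo a b c d = expo a' b' c' d' ↔ a = a' ∧ b = b' ∧ c = c' ∧ d = d' := by
  constructor
  · intro h
    obtain ⟨h1, h2, h3, h4⟩ := expo_apply a b c d
    obtain ⟨h1', h2', h3', h4'⟩ := expo_apply a' b' c' d'
    rw [h] at h1 h2 h3 h4
    omega
  · rintro ⟨rfl, rfl, rfl, rfl⟩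
    rfl

theorem monomial_expo {k : Type*} [Field k] (a b c d : ℕ) :
    (monomial (expo a b c d) 1 : MvPolynomial H2 k) =
      X (0, 0) ^ a * X (0, 1) ^ b * X (1, 0) ^ c * X (1, 1) ^ d := by
  simp [expo, X_pow_eq_monomial, monomial_mul]

/-- Translation by `x` is an involution of `H`, so the direction of the permutation is immaterial. -/
theorem act_alpha {k : Type*} [Field k] (x : H2) (f : MvPolynomial H2 k) :
    act (alphaM k x) f = rename (· + x) f := by
  have hx : ∀ z w : H2, z = w + x ↔ z + x = w := by
    revert x; decide
  have : act (alphaM k x) = rename (· + x) := by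
    apply MvPolynomial.algHom_ext
    intro z
    simp [act, alphaM, hx]
  rw [this]

theorem act_beta_X {k : Type*} [Field k] (x z : H2) :
    act (betaM k x) (X z) = pairing k x z • X z := by
  simp [act, betaM, Matrix.diagonal_apply]

theorem pairing_01 (k : Type*) [Field k] : pairing k (0, 1) (0, 0) = 1 ∧
    pairing k (0, 1) (0, 1) = -1 ∧ pairing k (0, 1) (1, 0) = 1 ∧
    pairing k (0, 1) (1, 1) = -1 := by
  simp [pairing, ZMod.val_one]

theorem pairing_10 (k : Type*) [Field k] : pairing k (1, 0) (0, 0) = 1 ∧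
    pairing k (1, 0) (0, 1) = 1 ∧ pairing k (1, 0) (1, 0) = -1 ∧
    pairing k (1, 0) (1, 1) = -1 := by
  simp [pairing, ZMod.val_one]

/-- `β_x` scales the monomial with exponents `m` by `∏ ⟨x, z⟩ ^ m z`. -/
theorem coeff_act_beta {k : Type*} [Field k] (x : H2) (f : MvPolynomial H2 k) (m : H2 →₀ ℕ) :
    coeff m (act (betaM k x) f) = (m.prod fun z e => pairing k x z ^ e) * coeff m f := by
  induction f using MvPolynomial.induction_on' with
  | monomial u a =>
    have : act (betaM k x) (monomial u a) =
        monomial u ((u.prod fun z e => pairing k x z ^ e) * a) := by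
      rw [monomial_eq, map_mul, map_finsuppProd]
      simp only [map_pow, act_beta_X, smul_pow]
      rw [monomial_eq, C_mul, mul_comm (C _) (C a), mul_assoc]
      congr 1
      · simp [act, algebraMap_eq]
      · simp only [Finsupp.prod, smul_eq_C_mul, Finset.prod_mul_distrib, map_prod]
    rw [this, coeff_monomial, coeff_monomial]
    split_ifs with h
    · rw [h]
    · simp
  | add p q hp hq => simp [hp, hq, mul_add]

theorem prod_expo {k : Type*} [Field k] (g : H2 → k) (a b c d : ℕ) :
    ((expo a b c d).prod fun z e => g z ^ e) =
      g (0, 0) ^ a * g (0, 1) ^ b * g (1, 0) ^ c * g (1, 1) ^ d := by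
  have h0 : ∀ z : H2, g z ^ 0 = 1 := fun z => pow_zero _
  have h1 : ∀ z : H2, ∀ e₁ e₂ : ℕ, g z ^ (e₁ + e₂) = g z ^ e₁ * g z ^ e₂ :=
    fun z => pow_add _
  simp only [expo, Finsupp.prod_add_index' h0 h1]
  simp

/-- The joint hypotheses of degree 4 and invariance under `α₀₁, α₁₀, β₀₁, β₁₀`. -/
def IsInvQuartic {k : Type*} [Field k] (g : MvPolynomial H2 k) : Prop :=
  g.IsHomogeneous 4 ∧ act (alphaM k (0, 1)) g = g ∧ act (alphaM k (1, 0)) g = g ∧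
    act (betaM k (0, 1)) g = g ∧ act (betaM k (1, 0)) g = g

theorem IsInvQuartic.add {k : Type*} [Field k] {f g : MvPolynomial H2 k}
    (hf : IsInvQuartic f) (hg : IsInvQuartic g) : IsInvQuartic (f + g) := by
  obtain ⟨f0, f1, f2, f3, f4⟩ := hf
  obtain ⟨g0, g1, g2, g3, g4⟩ := hg
  exact ⟨f0.add g0, by rw [map_add, f1, g1], by rw [map_add, f2, g2], by rw [map_add, f3, g3],
    by rw [map_add, f4, g4]⟩

theorem IsInvQuartic.smul {k : Type*} [Field k] {f : MvPolynomial H2 k} (c : k)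
    (hf : IsInvQuartic f) : IsInvQuartic (c • f) := by
  obtain ⟨f0, f1, f2, f3, f4⟩ := hf
  refine ⟨?_, by rw [map_smul, f1], by rw [map_smul, f2], by rw [map_smul, f3],
    by rw [map_smul, f4]⟩
  exact (homogeneousSubmodule H2 k 4).smul_mem c f0

/-- The coefficients of an invariant quartic are constant on translation orbits of exponents. -/
theorem coeff_act_alpha_fixed {k : Type*} [Field k] {f : MvPolynomial H2 k}
    (hf : IsInvQuartic f) (a b c d : ℕ) :
    coeff (expo a b c d) f = coeff (expo b a d c) f ∧
      coeff (expo a b c d) f = coeff (expo c d a b) f := by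
  obtain ⟨-, f1, f2, -, -⟩ := hf
  rw [act_alpha] at f1 f2
  have e : (1 : ZMod 2) + 1 = 0 := rfl
  constructor
  · have h := coeff_rename_mapDomain (· + ((0, 1) : H2)) (add_left_injective _) f (expo a b c d)
    rw [f1] at h
    rw [← h]
    congr 1
    simp only [expo, Finsupp.mapDomain_add, Finsupp.mapDomain_single, Prod.mk_add_mk, e, add_zero,
      zero_add]
    abel
  · have h := coeff_rename_mapDomain (· + ((1, 0) : H2)) (add_left_injective _) f (expo a b c d)
    rw [f2] at h
    rw [← h]
    congr 1
    simp only [expo, Finsupp.mapDomain_add, Finsupp.mapDomain_single, Prod.mk_add_mk, e, add_zero,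
      zero_add]
    abel

theorem eq_zero_of_eq_neg_one_pow_mul {k : Type*} [Field k] (h2 : (2 : k) ≠ 0) {n : ℕ}
    (hn : Odd n) {t : k} (h : t = (-1) ^ n * t) : t = 0 := by
  rw [hn.neg_one_pow] at h
  have : 2 * t = 0 := by linear_combination h
  exact (mul_eq_zero.mp this).resolve_left h2

theorem even_of_coeff_ne_zero {k : Type*} [Field k] (h2 : (2 : k) ≠ 0) {f : MvPolynomial H2 k}
    (hf : IsInvQuartic f) (a b c d : ℕ) (hne : coeff (expo a b c d) f ≠ 0) :
    Even (b + d) ∧ Even (c + d) := by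
  obtain ⟨-, -, -, f3, f4⟩ := hf
  constructor
  · by_contra ho
    have h := coeff_act_beta (0, 1) f (expo a b c d)
    obtain ⟨p0, p1, p2, p3⟩ := pairing_01 k
    rw [f3, prod_expo, p0, p1, p2, p3, one_pow, one_pow, one_mul, mul_one, ← pow_add] at h
    exact hne (eq_zero_of_eq_neg_one_pow_mul h2 (Nat.not_even_iff_odd.mp ho) h)
  · by_contra ho
    have h := coeff_act_beta (1, 0) f (expo a b c d)
    obtain ⟨p0, p1, p2, p3⟩ := pairing_10 k
    rw [f4, prod_expo, p0, p1, p2, p3, one_pow, one_pow, one_mul, one_mul, ← pow_add] at h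
    exact hne (eq_zero_of_eq_neg_one_pow_mul h2 (Nat.not_even_iff_odd.mp ho) h)

theorem degree_of_coeff_ne_zero {k : Type*} [Field k] {f : MvPolynomial H2 k}
    (hf : IsInvQuartic f) (a b c d : ℕ) (hne : coeff (expo a b c d) f ≠ 0) :
    a + b + c + d = 4 := by
  have h := hf.1 hne
  simpa [expo, map_add, Finsupp.weight_single] using h

/-- Exponents of one monomial in each of the five translation orbits that can occur. -/
noncomputable def rep : Fin 5 → (H2 →₀ ℕ) :=
  ![expo 4 0 0 0, expo 1 1 1 1, expo 2 2 0 0, expo 2 0 2 0, expo 2 0 0 2]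

/-- An invariant quartic is determined by its coefficients at the five orbit representatives. -/
theorem eq_zero_of_reps {k : Type*} [Field k] (h2 : (2 : k) ≠ 0) {f : MvPolynomial H2 k}
    (hf : IsInvQuartic f) (h : ∀ i, coeff (rep i) f = 0) : f = 0 := by
  ext m
  rw [eq_expo m, coeff_zero]
  generalize m (0, 0) = a, m (0, 1) = b, m (1, 0) = c, m (1, 1) = d
  by_contra hne
  obtain ⟨e1, e2⟩ := even_of_coeff_ne_zero h2 hf a b c d hne
  have hd := degree_of_coeff_ne_zero hf a b c d hne
  obtain ⟨t1, t2⟩ := coeff_act_alpha_fixed hf a b c d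
  -- translation by `11` is the composite of the other two
  have t3 := t1.trans (coeff_act_alpha_fixed hf b a d c).2
  have r0 : coeff (expo 4 0 0 0) f = 0 := h 0
  have r1 : coeff (expo 1 1 1 1) f = 0 := h 1
  have r2 : coeff (expo 2 2 0 0) f = 0 := h 2
  have r3 : coeff (expo 2 0 2 0) f = 0 := h 3
  have r4 : coeff (expo 2 0 0 2) f = 0 := h 4
  -- the parity conditions leave eleven exponents, each a translate of a representative
  rw [Nat.even_iff] at e1 e2
  have ha : a ≤ 4 := by omega
  have hb : b ≤ 4 := by omega
  have hc : c ≤ 4 := by omega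
  have hdd : d = 4 - a - b - c := by omega
  subst hdd
  interval_cases a <;> interval_cases b <;> interval_cases c <;> first | omega | simp_all

/-- The five quartics of the statement, as a family. -/
noncomputable def quartics (k : Type*) [Field k] : Fin 5 → MvPolynomial H2 k :=
  ![Sq k, Pq k, Q01q k, Q10q k, Q11q k]

theorem coeff_reps (k : Type*) [Field k] (i j : Fin 5) :
    coeff (rep i) (quartics k j) = if i = j then 1 else 0 := by
  have hS : Sq k = monomial (expo 4 0 0 0) 1 + monomial (expo 0 4 0 0) 1 +
      monomial (expo 0 0 4 0) 1 + monomial (expo 0 0 0 4) 1 := by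
    simp only [monomial_expo, Sq]; ring
  have hP : Pq k = monomial (expo 1 1 1 1) 1 := by
    simp only [monomial_expo, Pq]; ring
  have h01 : Q01q k = monomial (expo 2 2 0 0) 1 + monomial (expo 0 0 2 2) 1 := by
    simp only [monomial_expo, Q01q]; ring
  have h10 : Q10q k = monomial (expo 2 0 2 0) 1 + monomial (expo 0 2 0 2) 1 := by
    simp only [monomial_expo, Q10q]; ring
  have h11 : Q11q k = monomial (expo 2 0 0 2) 1 + monomial (expo 0 2 2 0) 1 := by
    simp only [monomial_expo, Q11q]; ring
  fin_cases i <;> fin_cases j <;>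
    simp [rep, quartics, hS, hP, h01, h10, h11, coeff_add, coeff_monomial, expo_inj]

theorem isInvQuartic_quartics (k : Type*) [Field k] (i : Fin 5) :
    IsInvQuartic (quartics k i) := by
  have hX : ∀ z : H2, (X z : MvPolynomial H2 k).IsHomogeneous 1 := isHomogeneous_X k
  have hX2 : ∀ z : H2, (X z ^ 2 : MvPolynomial H2 k).IsHomogeneous 2 := fun z => (hX z).pow 2
  have hX4 : ∀ z : H2, (X z ^ 4 : MvPolynomial H2 k).IsHomogeneous 4 := fun z => (hX z).pow 4
  have e : (1 : ZMod 2) + 1 = 0 := rfl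
  obtain ⟨p0, p1, p2, p3⟩ := pairing_01 k
  obtain ⟨q0, q1, q2, q3⟩ := pairing_10 k
  refine ⟨?_, ?_, ?_, ?_, ?_⟩
  · fin_cases i
    · exact (((hX4 _).add (hX4 _)).add (hX4 _)).add (hX4 _)
    · exact (((hX _).mul (hX _)).mul (hX _)).mul (hX _)
    all_goals exact ((hX2 _).mul (hX2 _)).add ((hX2 _).mul (hX2 _))
  · rw [act_alpha]
    fin_cases i <;> simp [quartics, Sq, Pq, Q01q, Q10q, Q11q, e] <;> ring
  · rw [act_alpha]
    fin_cases i <;> simp [quartics, Sq, Pq, Q01q, Q10q, Q11q, e] <;> ring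
  · fin_cases i <;>
      simp [quartics, Sq, Pq, Q01q, Q10q, Q11q, act_beta_X, p0, p1, p2, p3] <;> ring
  · fin_cases i <;>
      simp [quartics, Sq, Pq, Q01q, Q10q, Q11q, act_beta_X, q0, q1, q2, q3] <;> ring

theorem coeff_rep_sum {k : Type*} [Field k] (c : Fin 5 → k) (i : Fin 5) :
    coeff (rep i) (∑ j, c j • quartics k j) = c i := by
  simp [coeff_sum, coeff_smul, coeff_reps]


/-- The homogeneous polynomials of degree 4 in `k[x₀₀, x₀₁, x₁₀, x₁₁]` invariant under
the substitutions induced by `α₀₁`, `α₁₀`, `β₀₁`, `β₁₀` form a 5-dimensional `k`-vector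
space with basis `{S, P, Q₀₁, Q₁₀, Q₁₁}`. -/
theorem statement5 (k : Type*) [Field k] (hchar : ringChar k ≠ 2) :
    (∀ g ∈ ({Sq k, Pq k, Q01q k, Q10q k, Q11q k} : Set (MvPolynomial H2 k)),
      g.IsHomogeneous 4 ∧ act (alphaM k (0, 1)) g = g ∧ act (alphaM k (1, 0)) g = g ∧
        act (betaM k (0, 1)) g = g ∧ act (betaM k (1, 0)) g = g) ∧
    LinearIndependent k ![Sq k, Pq k, Q01q k, Q10q k, Q11q k] ∧
    (∀ f : MvPolynomial H2 k, f.IsHomogeneous 4 →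
      act (alphaM k (0, 1)) f = f → act (alphaM k (1, 0)) f = f →
      act (betaM k (0, 1)) f = f → act (betaM k (1, 0)) f = f →
      ∃ c : Fin 5 → k,
        f = c 0 • Sq k + c 1 • Pq k + c 2 • Q01q k + c 3 • Q10q k + c 4 • Q11q k) := by
  have h2 : (2 : k) ≠ 0 := Ring.two_ne_zero hchar
  refine ⟨?_, ?_, ?_⟩
  · rintro g (rfl | rfl | rfl | rfl | rfl)
    exacts [isInvQuartic_quartics k 0, isInvQuartic_quartics k 1, isInvQuartic_quartics k 2,
      isInvQuartic_quartics k 3, isInvQuartic_quartics k 4]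
  · rw [Fintype.linearIndependent_iff]
    intro c hc i
    rw [← coeff_rep_sum c i]
    exact (congrArg (coeff (rep i)) hc).trans (coeff_zero _)
  · intro f f0 f1 f2 f3 f4
    refine ⟨fun i => coeff (rep i) f, ?_⟩
    set c : Fin 5 → k := fun i => coeff (rep i) f with hc
    have hsum : c 0 • Sq k + c 1 • Pq k + c 2 • Q01q k + c 3 • Q10q k + c 4 • Q11q k =
        ∑ j, c j • quartics k j := by
      rw [Fin.sum_univ_five]
      rfl
    rw [hsum]
    have hinv : IsInvQuartic (∑ j, c j • quartics k j) := by
      rw [Fin.sum_univ_five]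
      have hs : ∀ j, IsInvQuartic (c j • quartics k j) :=
        fun j => (isInvQuartic_quartics k j).smul (c j)
      exact ((((hs 0).add (hs 1)).add (hs 2)).add (hs 3)).add (hs 4)
    have hf : IsInvQuartic f := ⟨f0, f1, f2, f3, f4⟩
    have hdiff : f + (-1 : k) • (∑ j, c j • quartics k j) = 0 := by
      refine eq_zero_of_reps h2 (hf.add (hinv.smul (-1))) fun i => ?_
      rw [coeff_add, coeff_smul, coeff_rep_sum, hc]
      simp
    rw [neg_one_smul, ← sub_eq_add_neg] at hdiff
    exact sub_eq_zero.mp hdiff
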